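/- Let η : ℝ → (0,∞) be C³ and 1-periodic, let ψ(x,z) = ∂ₓη(x)·χ(z/η(x)) with χ(s) = s²(3 − 2s), and define the vector field φ = ∇⊥ψ = (−∂_zψ, ∂ₓψ) on the closure of Ω_η. Then: (i) φ is divergence-free, i.e. ∂ₓφ₁ + ∂_zφ₂ = 0 on Ω_η; (ii) φ vanishes on the bottom boundary, φ(x,0) = (0,0) for all x; (iii) on the top boundary φ has purely vertical values matching the second derivative of the displacement, φ(x, η(x)) = (0, ∂ₓ²η(x)) for all x; and (iv) φ is 1-periodic in x. -/

import Mathlib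

open MeasureTheory Set

noncomputable section

/-- The cut-off function `χ(s) = s²(3 − 2s)`. -/
def cutoff (s : ℝ) : ℝ := s ^ 2 * (3 - 2 * s)

/-- The stream function `ψ(x,z) = ∂ₓη(x)·χ(z/η(x))`. -/
def stream (η : ℝ → ℝ) (p : ℝ × ℝ) : ℝ := deriv η p.1 * cutoff (p.2 / η p.1)

/-- First component of `φ = ∇⊥ψ = (−∂_zψ, ∂ₓψ)`. -/
def phi1 (η : ℝ → ℝ) (p : ℝ × ℝ) : ℝ := -(fderiv ℝ (stream η) p (0, 1))

/-- Second component of `φ = ∇⊥ψ = (−∂_zψ, ∂ₓψ)`. -/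
def phi2 (η : ℝ → ℝ) (p : ℝ × ℝ) : ℝ := fderiv ℝ (stream η) p (1, 0)

/-!
The rotated gradient of a `C²` function is divergence-free because mixed second derivatives
commute, and it inherits every period of that function. For `ψ(x, z) = a(x) χ(z/η(x))`, on a curve
`z = s η(x)` with `χ'(s) = 0` the gradient of `ψ` reduces to `(a'(x) χ(s), 0)`. The two boundaries
are the curves `s = 0` and `s = 1`, where `χ'` vanishes and `χ` equals `0` and `1`, so `∇⊥ψ` takes
the values `(0, 0)` and `(0, a'(x))`; the theorem is the case `a = ∂ₓη`.
-/

theorem fderiv_fderiv_apply_comm {𝕜 E F : Type*} [NontriviallyNormedField 𝕜]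
    [NormedAddCommGroup E] [NormedSpace 𝕜 E] [NormedAddCommGroup F] [NormedSpace 𝕜 F]
    {f : E → F} {x : E} {n : WithTop ℕ∞} (hf : ContDiffAt 𝕜 n f x)
    (hn : minSmoothness 𝕜 2 ≤ n) (v w : E) :
    fderiv 𝕜 (fun y => fderiv 𝕜 f y v) x w = fderiv 𝕜 (fun y => fderiv 𝕜 f y w) x v := by
  have hdiff : DifferentiableAt 𝕜 (fderiv 𝕜 f) x :=
    (hf.fderiv_right (m := 1) (le_minSmoothness.trans hn)).differentiableAt one_ne_zero
  have fderiv_apply (u : E) :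
      fderiv 𝕜 (fun y => fderiv 𝕜 f y u) x = (fderiv 𝕜 (fderiv 𝕜 f) x).flip u := by
    simpa using fderiv_clm_apply hdiff (differentiableAt_const u)
  rw [fderiv_apply, fderiv_apply]
  exact hf.isSymmSndFDerivAt hn w v

theorem periodic_fderiv {𝕜 E F : Type*} [NontriviallyNormedField 𝕜]
    [NormedAddCommGroup E] [NormedSpace 𝕜 E] [NormedAddCommGroup F] [NormedSpace 𝕜 F]
    {f : E → F} {c : E} (hf : Function.Periodic f c) : Function.Periodic (fderiv 𝕜 f) c := by
  intro x
  rw [← fderiv_comp_add_right, funext hf]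

theorem periodic_deriv {𝕜 F : Type*} [NontriviallyNormedField 𝕜]
    [NormedAddCommGroup F] [NormedSpace 𝕜 F] {f : 𝕜 → F} {c : 𝕜} (hf : Function.Periodic f c) :
    Function.Periodic (deriv f) c := by
  intro x
  rw [← deriv_comp_add_const, funext hf]

/-- The rotated gradient `∇⊥ψ = (−∂_zψ, ∂ₓψ)`, with the two partial derivatives taken from the
Fréchet derivative of `ψ`; its components for `ψ = stream η` are `phi1 η` and `phi2 η`. -/
def perpGrad (ψ : ℝ × ℝ → ℝ) (p : ℝ × ℝ) : ℝ × ℝ :=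
  (-(fderiv ℝ ψ p (0, 1)), fderiv ℝ ψ p (1, 0))

theorem divergence_perpGrad_eq_zero {ψ : ℝ × ℝ → ℝ} {p : ℝ × ℝ} (hψ : ContDiffAt ℝ 2 ψ p) :
    fderiv ℝ (fun q => (perpGrad ψ q).1) p (1, 0) +
      fderiv ℝ (fun q => (perpGrad ψ q).2) p (0, 1) = 0 := by
  simp only [perpGrad, fderiv_fun_neg, neg_apply]
  rw [fderiv_fderiv_apply_comm hψ (by simp) (0, 1) (1, 0), neg_add_cancel]

theorem periodic_perpGrad {ψ : ℝ × ℝ → ℝ} {v : ℝ × ℝ} (hψ : Function.Periodic ψ v) :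
    Function.Periodic (perpGrad ψ) v := by
  intro p
  simp only [perpGrad, periodic_fderiv hψ p]

/-- The stream function `a(x)·χ(z/η(x))` with amplitude `a` and vertical profile `χ`, used to
lift boundary data on the graph of `η` to the region below it. The choice `a = ∂ₓη`,
`χ = cutoff` gives `stream η`. Where `η` vanishes, the quotient is `0` by convention. -/
def profileStream (a χ η : ℝ → ℝ) (p : ℝ × ℝ) : ℝ := a p.1 * χ (p.2 / η p.1)

section ProfileStream

variable {a χ η : ℝ → ℝ}

theorem contDiffAt_profileStream {n : WithTop ℕ∞} {p : ℝ × ℝ} (ha : ContDiffAt ℝ n a p.1)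
    (hχ : ContDiffAt ℝ n χ (p.2 / η p.1)) (hη : ContDiffAt ℝ n η p.1) (hη₀ : η p.1 ≠ 0) :
    ContDiffAt ℝ n (profileStream a χ η) p := by
  have hquot : ContDiffAt ℝ n (fun q : ℝ × ℝ => q.2 / η q.1) p :=
    contDiffAt_snd.div (hη.comp p contDiffAt_fst) hη₀
  exact (ha.comp p contDiffAt_fst).mul (hχ.comp p hquot)

theorem hasFDerivAt_profileStream_of_hasDerivAt_zero {a' s x : ℝ} (ha : HasDerivAt a a' x)
    (hχ : HasDerivAt χ 0 s) (hη : DifferentiableAt ℝ η x) (hη₀ : η x ≠ 0) :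
    HasFDerivAt (profileStream a χ η) ((a' * χ s) • ContinuousLinearMap.fst ℝ ℝ ℝ)
      (x, s * η x) := by
  have hs : s * η x / η x = s := mul_div_cancel_right₀ s hη₀
  have hquot : DifferentiableAt ℝ (fun q : ℝ × ℝ => q.2 / η q.1) (x, s * η x) :=
    differentiableAt_snd.fun_mul
      ((DifferentiableAt.comp (x, s * η x) hη differentiableAt_fst).fun_inv hη₀)
  have hprofile : HasFDerivAt (fun q : ℝ × ℝ => χ (q.2 / η q.1)) (0 : ℝ × ℝ →L[ℝ] ℝ)
      (x, s * η x) :=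
    (hχ.comp_hasFDerivAt_of_eq (x, s * η x) hquot.hasFDerivAt hs.symm).congr_fderiv
      (zero_smul ℝ _)
  have hamplitude : HasFDerivAt (fun q : ℝ × ℝ => a q.1)
      (a' • ContinuousLinearMap.fst ℝ ℝ ℝ) (x, s * η x) :=
    ha.comp_hasFDerivAt (x, s * η x) hasFDerivAt_fst
  exact (hamplitude.mul hprofile).congr_fderiv (by simp [hs, smul_smul, mul_comm])

theorem perpGrad_profileStream_of_hasDerivAt_zero {a' s x : ℝ} (ha : HasDerivAt a a' x)
    (hχ : HasDerivAt χ 0 s) (hη : DifferentiableAt ℝ η x) (hη₀ : η x ≠ 0) :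
    perpGrad (profileStream a χ η) (x, s * η x) = (0, a' * χ s) := by
  simp [perpGrad, (hasFDerivAt_profileStream_of_hasDerivAt_zero ha hχ hη hη₀).fderiv]

theorem periodic_profileStream {c : ℝ} (ha : Function.Periodic a c)
    (hη : Function.Periodic η c) : Function.Periodic (profileStream a χ η) (c, 0) := by
  intro p
  simp only [profileStream, Prod.fst_add, Prod.snd_add, add_zero, ha p.1, hη p.1]

end ProfileStream

theorem contDiff_cutoff {n : WithTop ℕ∞} : ContDiff ℝ n cutoff := by
  unfold cutoff
  fun_prop

theorem hasDerivAt_cutoff (s : ℝ) : HasDerivAt cutoff (6 * s * (1 - s)) s := by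
  have hlinear : HasDerivAt (fun t : ℝ => 3 - 2 * t) (-(2 * 1)) s :=
    ((hasDerivAt_id' s).const_mul 2).const_sub 3
  exact ((hasDerivAt_pow 2 s).mul hlinear).congr_deriv (by push_cast; ring)

theorem stmt_11_general {a χ η : ℝ → ℝ} {c : ℝ} (ha : ContDiff ℝ 2 a)
    (hχ : ContDiff ℝ 2 χ) (hη : ContDiff ℝ 2 η) (hη₀ : ∀ x, η x ≠ 0)
    (hχ_zero : χ 0 = 0) (hχ_one : χ 1 = 1)
    (hχ'_zero : HasDerivAt χ 0 0) (hχ'_one : HasDerivAt χ 0 1)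
    (ha_per : Function.Periodic a c) (hη_per : Function.Periodic η c) :
    (∀ p, fderiv ℝ (fun q => (perpGrad (profileStream a χ η) q).1) p (1, 0) +
        fderiv ℝ (fun q => (perpGrad (profileStream a χ η) q).2) p (0, 1) = 0)
    ∧ (∀ x, perpGrad (profileStream a χ η) (x, 0) = (0, 0))
    ∧ (∀ x, perpGrad (profileStream a χ η) (x, η x) = (0, deriv a x))
    ∧ (∀ x z, perpGrad (profileStream a χ η) (x + c, z) =
        perpGrad (profileStream a χ η) (x, z)) := by
  have ha' (x : ℝ) : HasDerivAt a (deriv a x) x := (ha.differentiable two_ne_zero x).hasDerivAt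
  have hη' : Differentiable ℝ η := hη.differentiable two_ne_zero
  refine ⟨fun p => ?divergence, fun x => ?bottom, fun x => ?top, fun x z => ?periodic⟩
  case divergence =>
    exact divergence_perpGrad_eq_zero <|
      contDiffAt_profileStream ha.contDiffAt hχ.contDiffAt hη.contDiffAt (hη₀ p.1)
  case bottom =>
    simpa [hχ_zero] using
      perpGrad_profileStream_of_hasDerivAt_zero (ha' x) hχ'_zero (hη' x) (hη₀ x)
  case top =>
    simpa [hχ_one] using
      perpGrad_profileStream_of_hasDerivAt_zero (ha' x) hχ'_one (hη' x) (hη₀ x)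
  case periodic =>
    simpa using periodic_perpGrad (periodic_profileStream (χ := χ) ha_per hη_per) (x, z)

/-- admissibility of the test function `φ = ∇⊥ψ` in the proof of the
uniform no-contact result, Proposition 3.2. For a positive, C³, 1-periodic `η`:
(i) `φ` is divergence-free on `Ω_η`; (ii) `φ(x,0) = (0,0)`;
(iii) `φ(x,η(x)) = (0, ∂ₓ²η(x))`; (iv) `φ` is 1-periodic in `x`. -/
theorem stmt_11 (η : ℝ → ℝ) (hη : ContDiff ℝ 3 η) (hper : ∀ x, η (x + 1) = η x)
    (hpos : ∀ x, 0 < η x) :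
    (∀ p : ℝ × ℝ, p.1 ∈ Ioo (0:ℝ) 1 → p.2 ∈ Ioo 0 (η p.1) →
        fderiv ℝ (phi1 η) p (1, 0) + fderiv ℝ (phi2 η) p (0, 1) = 0)
    ∧ (∀ x : ℝ, phi1 η (x, 0) = 0 ∧ phi2 η (x, 0) = 0)
    ∧ (∀ x : ℝ, phi1 η (x, η x) = 0 ∧ phi2 η (x, η x) = deriv (deriv η) x)
    ∧ (∀ x z : ℝ, phi1 η (x + 1, z) = phi1 η (x, z) ∧ phi2 η (x + 1, z) = phi2 η (x, z)) := by
  have hη' : ContDiff ℝ 2 (deriv η) := (contDiff_succ_iff_deriv (n := 2).1 hη).2.2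
  obtain ⟨hdiv, hbottom, htop, hperiodic⟩ :=
    stmt_11_general (c := 1) hη' contDiff_cutoff (hη.of_le (by norm_num))
      (fun x => (hpos x).ne') (by simp [cutoff]) (by norm_num [cutoff])
      (by simpa using hasDerivAt_cutoff 0) (by simpa using hasDerivAt_cutoff 1)
      (periodic_deriv hper) hper
  exact ⟨fun p _ _ => hdiv p, fun x => Prod.mk.inj (hbottom x), fun x => Prod.mk.inj (htop x),
    fun x z => Prod.mk.inj (hperiodic x z)⟩

end
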